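/- Consider REL(Z_n × Z_m, {a,b}) where a = (1,0), b = (0,1), n ≥ m-1 and n, m ≥ 3. If n ≡ 1 (mod m) or n ≡ -1 (mod m), then Player 1 has a winning strategy; if n ≡ 0 (mod m), then Player 2 has a winning strategy. -/

import Mathlib

namespace RelatorGames

variable {G : Type*} [Group G]

/-- The letters available in the relator games: elements of `S` and their inverses. -/
def letters (S : Set G) : Set G := S ∪ (fun g => g⁻¹) '' S

/-- Evaluate a history of moves (most recent letter first) to a group element:
the group element represented by the word built so far. -/
def eval (h : List G) : G := h.reverse.prod

/-- A move `m` is legal after history `h`: it is a letter of `S ∪ S⁻¹` and it is not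
the inverse of the immediately preceding letter (no backtracking). -/
def LegalMove (S : Set G) (h : List G) (m : G) : Prop :=
  m ∈ letters S ∧ ∀ p ∈ h.head?, m ≠ p⁻¹

/-- Appending `m` to the history `h` produces a word equal in `G` to some earlier
prefix of the word (equivalently, the walk in the Cayley graph revisits a vertex). -/
def ClosesCycle (h : List G) (m : G) : Prop :=
  ∃ t, t <:+ h ∧ eval t = eval (m :: h)

/-- A strategy: a choice of next letter given the history (most recent letter first). -/
abbrev Strategy (G : Type*) := List G → G

/-- The sequence of histories arising when the first player (moving at even steps)
uses `σ` and the second player (moving at odd steps) uses `τ`. -/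
def hist (σ τ : Strategy G) : ℕ → List G
  | 0 => []
  | k + 1 =>
      (if k % 2 = 0 then σ (hist σ τ k) else τ (hist σ τ k)) :: hist σ τ k

/-- The move made at step `k` in the play of `σ` against `τ`. -/
def moveAt (σ τ : Strategy G) (k : ℕ) : G :=
  if k % 2 = 0 then σ (hist σ τ k) else τ (hist σ τ k)

/-- Step `j` is uneventful: the move made is legal and does not close a cycle. -/
def Ok (S : Set G) (σ τ : Strategy G) (j : ℕ) : Prop :=
  LegalMove S (hist σ τ j) (moveAt σ τ j) ∧ ¬ ClosesCycle (hist σ τ j) (moveAt σ τ j)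

/-- In the play of `σ` against `τ`, the player moving at steps congruent to `p` mod 2
wins the relator achievement game `REL(G,S)`: at the first eventful step, either it is
that player's turn and they legally close a cycle, or it is the opponent's turn and the
opponent has made an illegal move (in particular, has no legal move). -/
def RelWins (S : Set G) (p : ℕ) (σ τ : Strategy G) : Prop :=
  ∃ k : ℕ, (∀ j < k, Ok S σ τ j) ∧
    ((k % 2 = p ∧ LegalMove S (hist σ τ k) (moveAt σ τ k) ∧
        ClosesCycle (hist σ τ k) (moveAt σ τ k)) ∨
      (k % 2 ≠ p ∧ ¬ LegalMove S (hist σ τ k) (moveAt σ τ k)))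

/-- In the play of `σ` against `τ`, the player moving at steps congruent to `p` mod 2
wins the relator avoidance game `RAV(G,S)`: at the first eventful step it is the
opponent's turn, and the opponent either makes an illegal move (in particular, has no
legal move) or closes a cycle. -/
def RavWins (S : Set G) (p : ℕ) (σ τ : Strategy G) : Prop :=
  ∃ k : ℕ, (∀ j < k, Ok S σ τ j) ∧ k % 2 ≠ p ∧
    (¬ LegalMove S (hist σ τ k) (moveAt σ τ k) ∨ ClosesCycle (hist σ τ k) (moveAt σ τ k))

/-- Player 1 has a winning strategy for `REL(G,S)`. -/
def FirstWinsREL (S : Set G) : Prop :=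
  ∃ σ : Strategy G, ∀ τ : Strategy G, RelWins S 0 σ τ

/-- Player 2 has a winning strategy for `REL(G,S)`. -/
def SecondWinsREL (S : Set G) : Prop :=
  ∃ τ : Strategy G, ∀ σ : Strategy G, RelWins S 1 σ τ

/-- Player 1 has a winning strategy for `RAV(G,S)`. -/
def FirstWinsRAV (S : Set G) : Prop :=
  ∃ σ : Strategy G, ∀ τ : Strategy G, RavWins S 0 σ τ

/-- Player 2 has a winning strategy for `RAV(G,S)`. -/
def SecondWinsRAV (S : Set G) : Prop :=
  ∃ τ : Strategy G, ∀ σ : Strategy G, RavWins S 1 σ τ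

end RelatorGames

/-!
The responder aims at a staircase: he answers `x` by `y` and `y` by `x`, with `x = a ^ ±1` and
`y = b ^ ±1` fixed by the first moves, so that every round multiplies the word by `x * y`. If the
opponent instead undoes his own last letter, as in `x * y * x⁻¹`, the reply `y⁻¹` closes
a square. Player 2 starts the staircase at `(0, 0)`; for `n ≡ 1` Player 1 opens with `a` and starts
it at `(1, 0)`, and for `n ≡ -1` with `b` at `(0, 1)`. In each case the staircase from `(u, v)`
returns to the identity after exactly `n - u` rounds, by a move of the responder.

The opponent never closes a cycle: the walk stays within distance one of the diagonal through
`(u, v)`, and its first coordinate stays between `0` and `n`, so it could only meet itself at an end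
of the staircase. The one such coincidence is at `m = 3` with the opening `b`, where the vertex
`b ^ 2` is met again; but there the opponent must have played `b` after `b`, and `b ^ 3 = 1` wins.
-/

namespace RelatorGames

section Game

theorem length_hist {G : Type*} (σ τ : Strategy G) (k : ℕ) : (hist σ τ k).length = k := by
  induction k with
  | zero => rfl
  | succ k ih => simp [hist, ih]

variable {G : Type*} [Group G] {S : Set G}

/-- The player to move after the history `h` can win at once. -/
def Closable (S : Set G) (h : List G) : Prop :=
  ∃ r, LegalMove S h r ∧ ClosesCycle h r

/-- The player to move after the history `h` can win at once or hand over a history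
satisfying `Inv`. -/
def Answerable (S : Set G) (Inv : List G → Prop) (h : List G) : Prop :=
  ∃ r, LegalMove S h r ∧ (ClosesCycle h r ∨ Inv (r :: h))

/-- A property of histories which a player can keep handing over to the opponent, who never
wins from such a history. The length bound forces the game to end. -/
structure WinningInvariant (S : Set G) (Inv : List G → Prop) : Prop where
  not_closesCycle : ∀ {h c}, Inv h → LegalMove S h c → ¬ ClosesCycle h c
  answerable : ∀ {h c}, Inv h → LegalMove S h c → Answerable S Inv (c :: h)
  bounded : ∃ L, ∀ h, Inv h → h.length ≤ L

variable {Inv : List G → Prop} {h : List G} {σ τ : Strategy G} {p : ℕ}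

theorem Closable.answerable (hclose : Closable S h) : Answerable S Inv h :=
  hclose.imp fun _ hr => ⟨hr.1, .inl hr.2⟩

theorem WinningInvariant.along_play (hI : WinningInvariant S Inv) (hp : p < 2)
    (hmove : ∀ k, k % 2 = p → Answerable S Inv (hist σ τ k) →
      LegalMove S (hist σ τ k) (moveAt σ τ k) ∧
        (ClosesCycle (hist σ τ k) (moveAt σ τ k) ∨ Inv (moveAt σ τ k :: hist σ τ k)))
    (hp₀ : p = 0 → Answerable S Inv []) (hp₁ : p ≠ 0 → Inv []) {k : ℕ}
    (hok : ∀ j < k, Ok S σ τ j) :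
    (k % 2 = p → Answerable S Inv (hist σ τ k)) ∧ (k % 2 ≠ p → Inv (hist σ τ k)) := by
  induction k with
  | zero => exact ⟨fun h => hp₀ h.symm, fun h => hp₁ (Ne.symm h)⟩
  | succ k ih =>
    obtain ⟨ihAnswer, ihInv⟩ := ih fun j hj => hok j (by omega)
    obtain ⟨hlegal, hopen⟩ := hok k (by omega)
    refine ⟨fun hk => hI.answerable (ihInv (by omega)) hlegal, fun hk => ?_⟩
    have hk' : k % 2 = p := by omega
    exact (hmove k hk' (ihAnswer hk')).2.resolve_left hopen

theorem WinningInvariant.relWins (hI : WinningInvariant S Inv) (hp : p < 2)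
    (hmove : ∀ k, k % 2 = p → Answerable S Inv (hist σ τ k) →
      LegalMove S (hist σ τ k) (moveAt σ τ k) ∧
        (ClosesCycle (hist σ τ k) (moveAt σ τ k) ∨ Inv (moveAt σ τ k :: hist σ τ k)))
    (hp₀ : p = 0 → Answerable S Inv []) (hp₁ : p ≠ 0 → Inv []) : RelWins S p σ τ := by
  classical
  have along {k : ℕ} := hI.along_play hp hmove hp₀ hp₁ (k := k)
  have heventful : ∃ k, ¬ Ok S σ τ k := by
    by_contra! hok
    obtain ⟨L, hL⟩ := hI.bounded
    have hlen := hL _ ((along (k := 2 * L + 3 - p) fun j _ => hok j).2 (by omega))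
    rw [length_hist] at hlen
    omega
  obtain ⟨k, hk, hok⟩ : ∃ k, ¬ Ok S σ τ k ∧ ∀ j < k, Ok S σ τ j :=
    ⟨Nat.find heventful, Nat.find_spec heventful,
      fun _ hj => not_not.1 (Nat.find_min heventful hj)⟩
  refine ⟨k, hok, ?_⟩
  by_cases hkp : k % 2 = p
  · have hlegal := (hmove k hkp ((along hok).1 hkp)).1
    exact .inl ⟨hkp, hlegal, by_contra fun hopen => hk ⟨hlegal, hopen⟩⟩
  · exact .inr ⟨hkp, fun hlegal => hk ⟨hlegal, hI.not_closesCycle ((along hok).2 hkp) hlegal⟩⟩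

theorem exists_answering_strategy (S : Set G) (Inv : List G → Prop) :
    ∃ s : Strategy G, ∀ h, Answerable S Inv h →
      LegalMove S h (s h) ∧ (ClosesCycle h (s h) ∨ Inv (s h :: h)) := by
  have hreply (h : List G) : ∃ r, Answerable S Inv h →
      LegalMove S h r ∧ (ClosesCycle h r ∨ Inv (r :: h)) := by
    by_cases H : Answerable S Inv h
    · exact H.imp fun r hr _ => hr
    · exact ⟨1, fun H' => absurd H' H⟩
  choose s hs using hreply
  exact ⟨s, hs⟩

theorem WinningInvariant.firstWinsREL (hI : WinningInvariant S Inv)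
    (hstart : Answerable S Inv []) : FirstWinsREL S := by
  obtain ⟨s, hs⟩ := exists_answering_strategy S Inv
  refine ⟨s, fun τ => hI.relWins two_pos (fun k hk hans => ?_) (fun _ => hstart) (by simp)⟩
  have hmove : moveAt s τ k = s (hist s τ k) := if_pos hk
  simpa only [← hmove] using hs _ hans

theorem WinningInvariant.secondWinsREL (hI : WinningInvariant S Inv)
    (hstart : Inv []) : SecondWinsREL S := by
  obtain ⟨s, hs⟩ := exists_answering_strategy S Inv
  refine ⟨s, fun σ => hI.relWins one_lt_two (fun k hk hans => ?_) (by simp) (fun _ => hstart)⟩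
  have hmove : moveAt σ s k = s (hist σ s k) := if_neg (by omega)
  simpa only [← hmove] using hs _ hans

end Game

section Letters

variable {G : Type*} [Group G] {S : Set G} {c d : G} {h : List G}

@[simp]
theorem eval_nil : eval ([] : List G) = 1 := rfl

@[simp]
theorem eval_cons (c : G) (h : List G) : eval (c :: h) = eval h * c := by
  simp [eval]

@[simp]
theorem legalMove_nil : LegalMove S [] c ↔ c ∈ letters S := by
  simp [LegalMove]

@[simp]
theorem legalMove_cons : LegalMove S (d :: h) c ↔ c ∈ letters S ∧ c ≠ d⁻¹ := by
  simp [LegalMove]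

theorem mem_letters_pair {a b g : G} :
    g ∈ letters {a, b} ↔ g = a ∨ g = b ∨ g = a⁻¹ ∨ g = b⁻¹ := by
  simp only [letters, Set.image_pair, Set.mem_union, Set.mem_insert_iff, Set.mem_singleton_iff]
  tauto

theorem letters_pair_of_mem_inv {a b x y : G} (hx : x ∈ ({a, a⁻¹} : Set G))
    (hy : y ∈ ({b, b⁻¹} : Set G)) : letters {x, y} = letters {a, b} := by
  ext g
  obtain ⟨rfl | rfl, rfl | rfl⟩ := And.intro hx hy <;>
    simp only [mem_letters_pair, inv_inv] <;> tauto

theorem eval_backtrack (hcd : Commute c d) (h : List G) :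
    eval (c⁻¹ :: d :: c :: h) = eval (d :: h) := by
  rw [eval_cons, eval_cons, eval_cons, eval_cons, mul_assoc (eval h), hcd.eq, ← mul_assoc,
    mul_inv_cancel_right]

theorem not_closesCycle_backtrack (hcd : Commute c d) (hc : c ≠ 1) (hne : c ≠ d)
    (hd : ¬ ClosesCycle h d) : ¬ ClosesCycle (d :: c :: h) c⁻¹ := by
  rintro ⟨t, ht, he⟩
  rw [List.suffix_cons_iff, List.suffix_cons_iff] at ht
  rcases ht with rfl | rfl | ht
  · rw [eval_cons c⁻¹, left_eq_mul, inv_eq_one] at he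
    exact hc he
  · rw [eval_backtrack hcd, eval_cons, eval_cons, mul_right_inj] at he
    exact hne he
  · exact hd ⟨t, ht, he.trans (eval_backtrack hcd h)⟩

theorem closable_backtrack (hcd : Commute c d) (hmul : c * d ≠ 1) (hd : d⁻¹ ∈ letters S) :
    Closable S (c⁻¹ :: d :: c :: h) := by
  refine ⟨d⁻¹, legalMove_cons.2 ⟨hd, fun h => hmul ?_⟩, h, ?_, ?_⟩
  · rw [hcd.eq, mul_eq_one_iff_eq_inv, ← inv_eq_iff_eq_inv, h, inv_inv]
  · exact ⟨[c⁻¹, d, c], rfl⟩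
  · rw [eval_cons d⁻¹, eval_backtrack hcd, eval_cons, mul_inv_cancel_right]

end Letters

section Staircase

variable {G : Type*} [Group G] {S : Set G} {x y c d : G} {base h : List G} {k N : ℕ}

/-- The history `h` consists of `base` and `k` further rounds, in each of which the opponent
played one of `x`, `y` and was answered by the other one, there being no winning reply. -/
inductive Staircase (S : Set G) (x y : G) (base : List G) : ℕ → List G → Prop
  | start : Staircase S x y base 0 base
  | round {k : ℕ} {h : List G} {c d : G} : Staircase S x y base k h → s(c, d) = s(x, y) →
      ¬ Closable S (c :: h) → Staircase S x y base (k + 1) (d :: c :: h)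

theorem Staircase.length_eq (H : Staircase S x y base k h) :
    h.length = base.length + 2 * k := by
  induction H with
  | start => simp
  | round _ _ _ ih => simp only [List.length_cons, ih]; ring

theorem Staircase.eval_eq (hxy : Commute x y) (H : Staircase S x y base k h) :
    eval h = eval base * (x * y) ^ k := by
  induction H with
  | start => simp
  | @round k h c d _ hcd _ ih =>
    have hmul : c * d = x * y := by
      rcases Sym2.eq_iff.1 hcd with ⟨rfl, rfl⟩ | ⟨rfl, rfl⟩
      exacts [rfl, hxy.symm.eq]
    rw [eval_cons, eval_cons, ih, mul_assoc, hmul, mul_assoc, pow_succ]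

theorem Staircase.answer_round (hxy : Commute x y) (hmul : x * y ≠ 1)
    (hS : letters {x, y} ⊆ letters S) (hend : eval base * (x * y) ^ N = 1)
    (H : Staircase S x y base k h) (hk : k < N) (hcd : s(c, d) = s(x, y)) :
    Answerable S (fun h => ∃ k < N, Staircase S x y base k h) (c :: h) := by
  by_cases hclose : Closable S (c :: h)
  · exact hclose.answerable
  have H' := H.round hcd hclose
  refine ⟨d, legalMove_cons.2 ⟨hS (mem_letters_pair.2 ?_), ?_⟩, ?_⟩
  · rcases Sym2.eq_iff.1 hcd with ⟨rfl, rfl⟩ | ⟨rfl, rfl⟩ <;> simp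
  · rw [ne_eq, ← mul_eq_one_iff_eq_inv]
    rcases Sym2.eq_iff.1 hcd with ⟨rfl, rfl⟩ | ⟨rfl, rfl⟩
    exacts [hxy.eq ▸ hmul, hmul]
  · rcases Nat.lt_or_ge (k + 1) N with hlt | hge
    · exact .inr ⟨k + 1, hlt, H'⟩
    · obtain rfl : k + 1 = N := by omega
      exact .inl ⟨[], List.nil_suffix, by rw [H'.eval_eq hxy, hend, eval_nil]⟩

theorem Staircase.eq_backtrack_of_legalMove {g : G} (hS : letters S ⊆ letters {x, y})
    (H : Staircase S x y base (k + 1) h) (hlegal : LegalMove S h g) (hx : g ≠ x) (hy : g ≠ y) :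
    ∃ h' c d, Staircase S x y base k h' ∧ s(c, d) = s(x, y) ∧ h = d :: c :: h' ∧ g = c⁻¹ := by
  obtain _ | ⟨H', hcd, -⟩ := H
  rename_i h' c d
  refine ⟨h', c, d, H', hcd, rfl, ?_⟩
  obtain ⟨hg, hgd⟩ := legalMove_cons.1 hlegal
  have hg := mem_letters_pair.1 (hS hg)
  rcases Sym2.eq_iff.1 hcd with ⟨rfl, rfl⟩ | ⟨rfl, rfl⟩ <;> tauto

end Staircase

section Coordinates

/-- The coordinates `(i, j)` of the vertices on a walk which starts at `(0, 0)`, then visits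
`(u, v)`, and goes on with `k` rounds, each of which increases both coordinates by one. The
round leaving `(u, v)` may pass through `(u, v + 1)` only if `q` holds. -/
def Visited (u v k : ℤ) (q : Prop) (i j : ℤ) : Prop :=
  (i = 0 ∧ j = 0) ∨ (u ≤ i ∧ i ≤ u + k ∧ j - i = v - u) ∨
    (u < i ∧ i ≤ u + k ∧ j - i = v - u - 1) ∨
    (u ≤ i ∧ i < u + k ∧ j - i = v - u + 1 ∧ (i = u → q))

variable {n m u v k i j : ℤ} {q : Prop}

theorem Visited.succ (hV : Visited u v k q i j) : Visited u v (k + 1) q i j := by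
  rcases hV with h | ⟨hu, hk, h⟩ | ⟨hu, hk, h⟩ | ⟨hu, hk, h⟩
  · exact .inl h
  · exact .inr (.inl ⟨hu, by omega, h⟩)
  · exact .inr (.inr (.inl ⟨hu, by omega, h⟩))
  · exact .inr (.inr (.inr ⟨hu, by omega, h⟩))

theorem eq_zero_or_le_of_dvd (h : m ∣ i) : i = 0 ∨ m ≤ i ∨ i ≤ -m := by
  by_contra! hi
  exact hi.1 (Int.eq_zero_of_abs_lt_dvd h (abs_lt.2 ⟨hi.2.2, hi.2.1⟩))

theorem eq_zero_or_eq_of_dvd (h : n ∣ i) (h₀ : 0 ≤ i) (hn : i ≤ n) : i = 0 ∨ i = n := by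
  rcases eq_zero_or_le_of_dvd h with h | h | h <;> omega

theorem Visited.not_congr_right (hm : 3 ≤ m) (hu : 0 ≤ u) (hv : 0 ≤ v) (huv : u + v ≤ 1)
    (hmod : m ∣ n + v - u) (hq : m = 3 → v = 1 → ¬ q) (hk₀ : 0 ≤ k)
    (hk : u + k < n) (hV : Visited u v k q i j) : ¬ (n ∣ u + k + 1 - i ∧ m ∣ v + k - j) := by
  rintro ⟨hi, hj⟩
  -- The first coordinates agree or differ by `n`; in the latter case `hwrap` is about `i - j - 1`.
  have hwrap := eq_zero_or_le_of_dvd (dvd_sub hj hmod)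
  have hj := eq_zero_or_le_of_dvd hj
  have hi := eq_zero_or_eq_of_dvd hi
  rcases hV with h | ⟨_, _, h⟩ | ⟨_, _, h⟩ | ⟨_, _, h, hq'⟩
  · omega
  · omega
  · omega
  · by_cases hm3 : m = 3 ∧ v = 1
    · have hiu : i ≠ u := fun hi => hq hm3.1 hm3.2 (hq' hi)
      omega
    · omega

theorem Visited.not_congr_up (hm : 3 ≤ m) (hu : 0 ≤ u) (hv : 0 ≤ v) (huv : u + v ≤ 1)
    (hk₀ : 0 ≤ k) (hk : u + k < n)
    (hV : Visited u v k q i j) : ¬ (n ∣ u + k - i ∧ m ∣ v + k + 1 - j) := by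
  rintro ⟨hi, hj⟩
  have hj := eq_zero_or_le_of_dvd hj
  have hi := eq_zero_or_eq_of_dvd hi
  rcases hV with h | ⟨_, _, h⟩ | ⟨_, _, h⟩ | ⟨_, _, h, -⟩ <;> omega

end Coordinates

section IndependentPair

variable {G : Type*} [Group G] {n m : ℕ} {x y a b : G}

/-- `x` and `y` generate an internal direct product of cyclic groups of orders `n` and `m`,
with `x` and `y` in the roles of `(1, 0)` and `(0, 1)`. -/
structure IndependentPair (n m : ℕ) (x y : G) : Prop where
  commute : Commute x y
  zpow_mul_zpow_eq_one_iff : ∀ i j : ℤ, x ^ i * y ^ j = 1 ↔ (n : ℤ) ∣ i ∧ (m : ℤ) ∣ j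

namespace IndependentPair

theorem pow_mul_pow_inj (P : IndependentPair n m x y) {i j i' j' : ℕ} :
    x ^ i * y ^ j = x ^ i' * y ^ j' ↔ (n : ℤ) ∣ i' - i ∧ (m : ℤ) ∣ j' - j := by
  have hquot : x ^ i' * y ^ j' =
      x ^ i * y ^ j * (x ^ (i' - i : ℤ) * y ^ (j' - j : ℤ)) := by
    rw [(P.commute.symm.pow_left j).zpow_right _ |>.mul_mul_mul_comm, ← zpow_natCast x i,
      ← zpow_natCast y j, ← zpow_add, ← zpow_add, add_sub_cancel, add_sub_cancel,
      zpow_natCast, zpow_natCast]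
  rw [hquot, left_eq_mul, P.zpow_mul_zpow_eq_one_iff]

theorem symm (P : IndependentPair n m x y) : IndependentPair m n y x where
  commute := P.commute.symm
  zpow_mul_zpow_eq_one_iff i j := by
    rw [← (P.commute.zpow_zpow j i).eq, P.zpow_mul_zpow_eq_one_iff, and_comm]

theorem inv_left (P : IndependentPair n m x y) : IndependentPair n m x⁻¹ y where
  commute := P.commute.inv_left
  zpow_mul_zpow_eq_one_iff i j := by
    rw [inv_zpow', P.zpow_mul_zpow_eq_one_iff, dvd_neg]

theorem inv_right (P : IndependentPair n m x y) : IndependentPair n m x y⁻¹ :=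
  P.symm.inv_left.symm

theorem of_mem_inv (P : IndependentPair n m a b) (hx : x ∈ ({a, a⁻¹} : Set G))
    (hy : y ∈ ({b, b⁻¹} : Set G)) : IndependentPair n m x y := by
  obtain ⟨rfl | rfl, rfl | rfl⟩ := And.intro hx hy
  exacts [P, P.inv_right, P.inv_left, P.inv_left.inv_right]

theorem pow_mul_pow_eq_one_iff (P : IndependentPair n m x y) (i j : ℕ) :
    x ^ i * y ^ j = 1 ↔ n ∣ i ∧ m ∣ j := by
  simpa [Int.natCast_dvd_natCast] using P.zpow_mul_zpow_eq_one_iff i j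

theorem left_ne_one (P : IndependentPair n m x y) (hn : n ≠ 1) : x ≠ 1 := fun h =>
  hn (Nat.dvd_one.1 ((P.pow_mul_pow_eq_one_iff 1 0).1 (by simpa using h)).1)

theorem mul_ne_one (P : IndependentPair n m x y) (hn : n ≠ 1) : x * y ≠ 1 := fun h =>
  hn (Nat.dvd_one.1 ((P.pow_mul_pow_eq_one_iff 1 1).1 (by simpa using h)).1)

theorem ne (P : IndependentPair n m x y) (hn : n ≠ 1) : x ≠ y := fun h =>
  P.inv_right.mul_ne_one hn (by rw [h, mul_inv_cancel])

end IndependentPair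

end IndependentPair

section Freshness

variable {G : Type*} [Group G] {S : Set G} {n m u v k : ℕ} {x y : G} {base h t : List G}

theorem pow_mul_pow_mul_mul_pow (hxy : Commute x y) (u v k : ℕ) :
    x ^ u * y ^ v * (x * y) ^ k = x ^ (u + k) * y ^ (v + k) := by
  rw [hxy.mul_pow, (hxy.symm.pow_pow v k).mul_mul_mul_comm, ← pow_add, ← pow_add]

theorem Staircase.eval_eq_pow_mul_pow (hxy : Commute x y) (hbase : eval base = x ^ u * y ^ v)
    (H : Staircase S x y base k h) : eval h = x ^ (u + k) * y ^ (v + k) := by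
  rw [H.eval_eq hxy, hbase, pow_mul_pow_mul_mul_pow hxy]

theorem eval_cons_left (hxy : Commute x y) {i j : ℕ} (hh : eval h = x ^ i * y ^ j) :
    eval (x :: h) = x ^ (i + 1) * y ^ j := by
  rw [eval_cons, hh, mul_assoc, (hxy.symm.pow_left j).eq, ← mul_assoc, pow_succ]

theorem eval_cons_right {i j : ℕ} (hh : eval h = x ^ i * y ^ j) :
    eval (y :: h) = x ^ i * y ^ (j + 1) := by
  rw [eval_cons, hh, mul_assoc, pow_succ]

theorem Staircase.exists_visited (hxy : Commute x y) (hlen : base.length ≤ 1)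
    (hbase : eval base = x ^ u * y ^ v) (H : Staircase S x y base k h) (ht : t <:+ h) :
    ∃ i j : ℕ, eval t = x ^ i * y ^ j ∧ Visited u v k (¬ Closable S (y :: base)) i j := by
  induction H with
  | start =>
    rcases Nat.eq_zero_or_pos t.length with ht₀ | ht₀
    · rw [List.length_eq_zero_iff] at ht₀
      exact ⟨0, 0, by simp [ht₀], .inl (by simp)⟩
    · rw [ht.eq_of_length_le (by omega)]
      exact ⟨u, v, hbase, .inr (.inl (by simp))⟩
  | @round k h c d H hcd hclose ih =>
    have heval := H.eval_eq_pow_mul_pow hxy hbase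
    rw [List.suffix_cons_iff, List.suffix_cons_iff] at ht
    rcases ht with rfl | rfl | ht
    · exact ⟨_, _, (H.round hcd hclose).eval_eq_pow_mul_pow hxy hbase,
        .inr (.inl (by push_cast; omega))⟩
    · rcases Sym2.eq_iff.1 hcd with ⟨rfl, rfl⟩ | ⟨rfl, rfl⟩
      · exact ⟨_, _, eval_cons_left hxy heval, .inr (.inr (.inl (by push_cast; omega)))⟩
      · refine ⟨_, _, eval_cons_right heval, .inr (.inr (.inr ⟨?_, ?_, ?_, fun hk => ?_⟩))⟩
        iterate 3 push_cast; omega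
        obtain rfl : k = 0 := by omega
        cases H
        exact hclose
    · obtain ⟨i, j, he, hV⟩ := ih ht
      exact ⟨i, j, he, by exact_mod_cast hV.succ⟩

theorem IndependentPair.closable_of_eval_eq (P : IndependentPair n 3 x y) (hS : y ∈ letters S)
    (hh : eval h = y) : Closable S (y :: h) := by
  have hinv : y ≠ y⁻¹ := fun hy => by
    have h2 := (P.pow_mul_pow_eq_one_iff 0 2).1 (by
      rwa [pow_zero, one_mul, pow_two, mul_eq_one_iff_eq_inv])
    omega
  have hcube : y ^ 3 = 1 := by simpa using (P.pow_mul_pow_eq_one_iff 0 3).2 (by simp)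
  refine ⟨y, legalMove_cons.2 ⟨hS, hinv⟩, [], List.nil_suffix, ?_⟩
  rw [eval_cons, eval_cons, hh, eval_nil, ← hcube, pow_three']

theorem Staircase.not_closesCycle (P : IndependentPair n m x y) (hm : 3 ≤ m)
    (hS : y ∈ letters S) (hlen : base.length ≤ 1) (huv : u + v ≤ 1)
    (hmod : (m : ℤ) ∣ n + v - u) (hbase : eval base = x ^ u * y ^ v)
    (H : Staircase S x y base k h) (hk : k < n - u) :
    ¬ ClosesCycle h x ∧ ¬ ClosesCycle h y := by
  have heval := H.eval_eq_pow_mul_pow P.commute hbase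
  constructor
  · rintro ⟨t, ht, he⟩
    obtain ⟨i, j, het, hV⟩ := H.exists_visited P.commute hlen hbase ht
    have hclose (hm3 : (m : ℤ) = 3) (hv : (v : ℤ) = 1) : ¬¬ Closable S (y :: base) := by
      obtain ⟨rfl, rfl, rfl⟩ : m = 3 ∧ v = 1 ∧ u = 0 := by omega
      exact not_not.2 (P.closable_of_eval_eq hS (by simpa using hbase))
    refine hV.not_congr_right (n := n) (m := m) (by omega) (by omega) (by omega) (by omega)
      hmod hclose (by omega) (by omega) ?_
    rw [het, eval_cons_left P.commute heval] at he
    exact_mod_cast P.pow_mul_pow_inj.1 he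
  · rintro ⟨t, ht, he⟩
    obtain ⟨i, j, het, hV⟩ := H.exists_visited P.commute hlen hbase ht
    refine hV.not_congr_up (n := n) (m := m) (by omega) (by omega) (by omega) (by omega)
      (by omega) (by omega) ?_
    rw [het, eval_cons_right heval] at he
    exact_mod_cast P.pow_mul_pow_inj.1 he

end Freshness

section Strategies

variable {G : Type*} [Group G] {S : Set G} {n m u v k N : ℕ} {x y a b g : G}
  {base h : List G}

theorem Staircase.answer_legalMove (P : IndependentPair n m x y) (hn : n ≠ 1) (hm : m ≠ 1)
    (hS : letters S = letters {x, y}) (hend : eval base * (x * y) ^ N = 1)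
    (hfresh : ∀ {l h}, l < N → Staircase S x y base l h →
      ¬ ClosesCycle h x ∧ ¬ ClosesCycle h y)
    (H : Staircase S x y base k h) (hk : k < N) (hg : LegalMove S h g)
    (hfirst : k = 0 → g = x ∨ g = y) :
    ¬ ClosesCycle h g ∧
      Answerable S (fun h => ∃ k < N, Staircase S x y base k h) (g :: h) := by
  have answer {c d : G} := H.answer_round P.commute (P.mul_ne_one hn) hS.ge hend hk
    (c := c) (d := d)
  by_cases hx : g = x
  · subst hx
    exact ⟨(hfresh hk H).1, answer rfl⟩
  by_cases hy : g = y
  · subst hy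
    exact ⟨(hfresh hk H).2, answer Sym2.eq_swap⟩
  obtain ⟨l, rfl⟩ : ∃ l, k = l + 1 := Nat.exists_eq_add_one_of_ne_zero (by tauto)
  obtain ⟨h', c, d, H', hcd, rfl, rfl⟩ := H.eq_backtrack_of_legalMove hS.le hg hx hy
  have hfresh' := hfresh (by omega) H'
  have hletters : d⁻¹ ∈ letters S := hS.ge (mem_letters_pair.2 (by
    rcases Sym2.eq_iff.1 hcd with ⟨rfl, rfl⟩ | ⟨rfl, rfl⟩ <;> simp))
  rcases Sym2.eq_iff.1 hcd with ⟨rfl, rfl⟩ | ⟨rfl, rfl⟩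
  · exact ⟨not_closesCycle_backtrack P.commute (P.left_ne_one hn) (P.ne hn) hfresh'.2,
      (closable_backtrack P.commute (P.mul_ne_one hn) hletters).answerable⟩
  · exact ⟨not_closesCycle_backtrack P.symm.commute (P.symm.left_ne_one hm) (P.symm.ne hm)
      hfresh'.1, (closable_backtrack P.symm.commute (P.symm.mul_ne_one hm) hletters).answerable⟩

/-- The letters `x = a ^ ±1` and `y = b ^ ±1` are compatible with the opening `base`, which
leads to the vertex with coordinates `(u, v)` relative to them. -/
structure SignChoice (a b : G) (base : List G) (u v : ℕ) (x y : G) : Prop where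
  left_mem : x ∈ ({a, a⁻¹} : Set G)
  right_mem : y ∈ ({b, b⁻¹} : Set G)
  eval_base : eval base = x ^ u * y ^ v

/-- The opening `base` has been followed by a staircase for some choice of signs. After `n - u`
rounds, the first coordinate of the walk would be `n`. -/
def OnStaircase (n : ℕ) (a b : G) (base : List G) (u v : ℕ) (h : List G) : Prop :=
  ∃ x y, SignChoice a b base u v x y ∧ ∃ k < n - u, Staircase {a, b} x y base k h

theorem OnStaircase.exists_signChoice (H : OnStaircase n a b base u v h)
    (hopen : LegalMove {a, b} base g →
      ∃ x y, SignChoice a b base u v x y ∧ (g = x ∨ g = y))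
    (hg : LegalMove {a, b} h g) :
    ∃ x y, SignChoice a b base u v x y ∧ ∃ k < n - u,
      Staircase {a, b} x y base k h ∧ (k = 0 → g = x ∨ g = y) := by
  obtain ⟨x, y, hxy, k, hk, H⟩ := H
  rcases Nat.eq_zero_or_pos k with rfl | hpos
  · cases H
    obtain ⟨x, y, hxy, hfirst⟩ := hopen hg
    exact ⟨x, y, hxy, 0, hk, .start, fun _ => hfirst⟩
  · exact ⟨x, y, hxy, k, hk, H, by omega⟩

theorem IndependentPair.opening_mul_pow_eq_one (P : IndependentPair n m x y) (hu : u ≤ n)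
    (hmod : (m : ℤ) ∣ n + v - u) : x ^ u * y ^ v * (x * y) ^ (n - u) = 1 := by
  rw [pow_mul_pow_mul_mul_pow P.commute, P.pow_mul_pow_eq_one_iff,
    ← Int.natCast_dvd_natCast (m := m), Nat.add_sub_cancel' hu, Nat.cast_add, Nat.cast_sub hu,
    ← add_sub_assoc, add_comm (v : ℤ)]
  exact ⟨dvd_rfl, hmod⟩

theorem IndependentPair.winningInvariant (P : IndependentPair n m a b) (hn : 2 ≤ n) (hm : 3 ≤ m)
    (hlen : base.length ≤ 1) (huv : u + v ≤ 1) (hmod : (m : ℤ) ∣ n + v - u)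
    (hopen : ∀ c, LegalMove {a, b} base c →
      ∃ x y, SignChoice a b base u v x y ∧ (c = x ∨ c = y)) :
    WinningInvariant {a, b} (OnStaircase n a b base u v) := by
  have hanswer {h c} (H : OnStaircase n a b base u v h) (hc : LegalMove {a, b} h c) :
      ¬ ClosesCycle h c ∧ Answerable {a, b} (OnStaircase n a b base u v) (c :: h) := by
    obtain ⟨x, y, hxy, k, hk, H, hfirst⟩ := H.exists_signChoice (hopen c) hc
    have Q : IndependentPair n m x y := P.of_mem_inv hxy.left_mem hxy.right_mem
    have hS : letters {a, b} = letters {x, y} :=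
      (letters_pair_of_mem_inv hxy.left_mem hxy.right_mem).symm
    have hend : eval base * (x * y) ^ (n - u) = 1 := by
      rw [hxy.eval_base, Q.opening_mul_pow_eq_one (by omega) hmod]
    have hy : y ∈ letters {a, b} := hS.ge (mem_letters_pair.2 (by simp))
    obtain ⟨hopen, r, hr, hans⟩ := H.answer_legalMove Q (by omega) (by omega) hS hend
      (fun hl H => H.not_closesCycle Q hm hy hlen huv hmod hxy.eval_base hl) hk hc hfirst
    exact ⟨hopen, r, hr, hans.imp_right fun H => ⟨x, y, hxy, H⟩⟩
  refine ⟨fun H hc => (hanswer H hc).1, fun H hc => (hanswer H hc).2, 1 + 2 * n, ?_⟩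
  rintro h ⟨x, y, -, k, hk, H⟩
  rw [H.length_eq]
  omega

theorem IndependentPair.secondWinsREL (P : IndependentPair n m a b) (hn : 2 ≤ n) (hm : 3 ≤ m)
    (hmod : (m : ℤ) ∣ n) : SecondWinsREL ({a, b} : Set G) := by
  refine (P.winningInvariant (base := []) (u := 0) (v := 0) hn hm (by simp) (by simp)
    (by simpa using hmod) fun c hc => ?_).secondWinsREL
    ⟨a, b, ⟨by simp, by simp, by simp⟩, 0, by omega, .start⟩
  rcases mem_letters_pair.1 hc.1 with rfl | rfl | rfl | rfl
  · exact ⟨c, b, ⟨by simp, by simp, by simp⟩, by simp⟩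
  · exact ⟨a, c, ⟨by simp, by simp, by simp⟩, by simp⟩
  · exact ⟨a⁻¹, b, ⟨by simp, by simp, by simp⟩, by simp⟩
  · exact ⟨a, b⁻¹, ⟨by simp, by simp, by simp⟩, by simp⟩

theorem IndependentPair.firstWinsREL_of_dvd_sub_one (P : IndependentPair n m a b) (hn : 2 ≤ n)
    (hm : 3 ≤ m) (hmod : (m : ℤ) ∣ n - 1) : FirstWinsREL ({a, b} : Set G) := by
  refine (P.winningInvariant (base := [a]) (u := 1) (v := 0) hn hm (by simp) (by simp)
    (by simpa using hmod) fun c hc => ?_).firstWinsREL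
    ⟨a, by simp [mem_letters_pair], .inr ⟨a, b, ⟨by simp, by simp, by simp⟩, 0, by omega, .start⟩⟩
  obtain ⟨hc, hca⟩ := legalMove_cons.1 hc
  rcases mem_letters_pair.1 hc with rfl | rfl | rfl | rfl
  · exact ⟨c, b, ⟨by simp, by simp, by simp⟩, by simp⟩
  · exact ⟨a, c, ⟨by simp, by simp, by simp⟩, by simp⟩
  · exact absurd rfl hca
  · exact ⟨a, b⁻¹, ⟨by simp, by simp, by simp⟩, by simp⟩

theorem IndependentPair.firstWinsREL_of_dvd_add_one (P : IndependentPair n m a b) (hn : 2 ≤ n)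
    (hm : 3 ≤ m) (hmod : (m : ℤ) ∣ n + 1) : FirstWinsREL ({a, b} : Set G) := by
  refine (P.winningInvariant (base := [b]) (u := 0) (v := 1) hn hm (by simp) (by simp)
    (by simpa using hmod) fun c hc => ?_).firstWinsREL
    ⟨b, by simp [mem_letters_pair], .inr ⟨a, b, ⟨by simp, by simp, by simp⟩, 0, by omega, .start⟩⟩
  obtain ⟨hc, hcb⟩ := legalMove_cons.1 hc
  rcases mem_letters_pair.1 hc with rfl | rfl | rfl | rfl
  · exact ⟨c, b, ⟨by simp, by simp, by simp⟩, by simp⟩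
  · exact ⟨a, c, ⟨by simp, by simp, by simp⟩, by simp⟩
  · exact ⟨a⁻¹, b, ⟨by simp, by simp, by simp⟩, by simp⟩
  · exact absurd rfl hcb

end Strategies

theorem independentPair_zmod (n m : ℕ) :
    IndependentPair n m (Multiplicative.ofAdd ((1, 0) : ZMod n × ZMod m))
      (Multiplicative.ofAdd ((0, 1) : ZMod n × ZMod m)) where
  commute := Commute.all _ _
  zpow_mul_zpow_eq_one_iff i j := by
    rw [← ofAdd_zsmul, ← ofAdd_zsmul, ← ofAdd_add, ofAdd_eq_one]
    simp [Prod.ext_iff, ZMod.intCast_zmod_eq_zero_iff_dvd]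

end RelatorGames

open RelatorGames in
theorem rel_product_cyclic_general {G : Type*} [Group G] {n m : ℕ} {a b : G} (hm : 3 ≤ m)
    (hn : 2 ≤ n) (P : IndependentPair n m a b) :
    ((n % m = 1 ∨ n % m = m - 1) → FirstWinsREL ({a, b} : Set G)) ∧
      (n % m = 0 → SecondWinsREL ({a, b} : Set G)) := by
  refine ⟨?_, fun h => P.secondWinsREL hn hm (by exact_mod_cast Nat.dvd_of_mod_eq_zero h)⟩
  have hdiv : (m : ℤ) * (n / m : ℕ) + (n % m : ℕ) = n := by exact_mod_cast Nat.div_add_mod n m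
  rintro (h | h)
  · refine P.firstWinsREL_of_dvd_sub_one hn hm ⟨(n / m : ℕ), ?_⟩
    rw [h] at hdiv
    push_cast at hdiv ⊢
    linarith
  · refine P.firstWinsREL_of_dvd_add_one hn hm ⟨(n / m : ℕ) + 1, ?_⟩
    rw [h, Nat.cast_sub (by omega)] at hdiv
    push_cast at hdiv ⊢
    linarith

open RelatorGames in
/-- In `REL(ℤ_n × ℤ_m, {a,b})` with `a = (1,0)`, `b = (0,1)`,
`n ≥ m - 1` and `n, m ≥ 3`: Player 1 wins if `n ≡ ±1 (mod m)`, and Player 2 wins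
if `n ≡ 0 (mod m)`. -/
theorem rel_product_cyclic (n m : ℕ) (hm : 3 ≤ m) (hn : 3 ≤ n) (hnm : m - 1 ≤ n) :
    ((n % m = 1 ∨ n % m = m - 1) →
      FirstWinsREL
        ({Multiplicative.ofAdd ((1, 0) : ZMod n × ZMod m),
            Multiplicative.ofAdd ((0, 1) : ZMod n × ZMod m)} :
          Set (Multiplicative (ZMod n × ZMod m)))) ∧
    (n % m = 0 →
      SecondWinsREL
        ({Multiplicative.ofAdd ((1, 0) : ZMod n × ZMod m),
            Multiplicative.ofAdd ((0, 1) : ZMod n × ZMod m)} :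
          Set (Multiplicative (ZMod n × ZMod m)))) := by
  exact rel_product_cyclic_general hm (by omega) (independentPair_zmod n m)
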